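/- Let k ≥ 0 be an integer and let φ: (0,1) → [0,∞) be C^k with |(1−ℰ)^k φ^{(k)}(ℰ)| ≤ C(1−ℰ)^{−1+ε} for some constants C, ε > 0 for all ℰ in a neighborhood of 1. Then for every real i > −1, the function g_i(η) = ∫_{e^{−η}}^{1} φ(ℰ)·[(ℰ² − e^{−2η})/2]^i dℰ is C^{[i]+k+1} on (0,∞), where [i] is the largest integer ≤ i. If moreover i ∉ ℕ and the function ℰ ↦ (1−ℰ)^k φ^{(k)}(ℰ) is Hölder continuous on (0,1) with exponent α > 1 + [i] − i, then g_i is C^{[i]+k+2} on (0,∞). -/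

import Mathlib

open Filter Set

/-- The kinetic integrals `g_i(η) = ∫_{e^{-η}}^1 φ(ℰ) [(ℰ² - e^{-2η})/2]^i dℰ`. -/
noncomputable def gfun (φ : ℝ → ℝ) (i η : ℝ) : ℝ :=
  ∫ E in Real.exp (-η)..1, φ E * (((E ^ 2 - Real.exp (-2 * η)) / 2) ^ i)


theorem lower_bd (k : ℕ) : ∀ (φ : ℝ → ℝ) (p : ℝ), p < 0 → ContDiffOn ℝ k φ (Ioo 0 1) →
    (∃ C : ℝ, ∃ δ ∈ Ioo (0:ℝ) 1, ∀ x ∈ Ioo (1 - δ) 1,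
      |iteratedDerivWithin k φ (Ioo 0 1) x| ≤ C * (1 - x) ^ (p - k)) →
    ∃ C : ℝ, ∃ δ ∈ Ioo (0:ℝ) 1, ∀ x ∈ Ioo (1 - δ) 1, |φ x| ≤ C * (1 - x) ^ p := by
  induction k with
  | zero =>
    intro φ p hp h1 ⟨C, δ, hδ, h⟩
    refine ⟨C, δ, hδ, fun x hx => ?_⟩
    simpa using h x hx
  | succ k ih =>
    intro φ p hp h1 ⟨C, δ, hδ, h⟩
    have hd : ContDiffOn ℝ k (derivWithin φ (Ioo 0 1)) (Ioo 0 1) := by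
      apply h1.derivWithin (uniqueDiffOn_Ioo 0 1)
      simp
    obtain ⟨C', δ', hδ', h'⟩ := ih (derivWithin φ (Ioo 0 1)) (p - 1) (by linarith) hd
      ⟨C, δ, hδ, fun x hx => by
        have := h x hx
        rw [iteratedDerivWithin_succ'] at this
        convert this using 3
        push_cast; ring⟩
    have hdiff : ∀ x ∈ Ioo (0:ℝ) 1, HasDerivAt φ (derivWithin φ (Ioo 0 1) x) x := by
      intro x hx
      have : DifferentiableWithinAt ℝ φ (Ioo 0 1) x :=
        (h1.differentiableOn (by simp)) x hx
      exact this.hasDerivWithinAt.hasDerivAt (isOpen_Ioo.mem_nhds hx)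
    set x0 : ℝ := 1 - δ' / 2 with hx0
    have hB : ∀ x : ℝ, x < 1 → HasDerivAt (fun y : ℝ => C' / (-p) * (1 - y) ^ p)
        (C' * (1 - x) ^ (p - 1)) x := by
      intro x hx
      have h2 : HasDerivAt (fun y : ℝ => 1 - y) (-1) x := by
        simpa using (hasDerivAt_id x).const_sub 1
      have := (h2.rpow_const (p := p) (Or.inl (by linarith))).const_mul (C' / (-p))
      have hp' : p ≠ 0 := hp.ne
      have e : C' / (-p) * (-1 * p * (1 - x) ^ (p - 1)) = C' * (1 - x) ^ (p - 1) := by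
        field_simp
      rw [← e]
      exact this
    have hsub : ∀ x ∈ Ico x0 1, x ∈ Ioo (0:ℝ) 1 ∧ x ∈ Ioo (1 - δ') 1 := by
      intro x hx
      have := hδ'.1; have := hδ'.2; have := hx.1; have := hx.2
      constructor <;> constructor <;> linarith
    have hx0m : x0 ∈ Ico x0 1 := ⟨le_rfl, by have := hδ'.1; linarith⟩
    have hm1 : MonotoneOn (fun y => C' / (-p) * (1 - y) ^ p - φ y) (Ico x0 1) := by
      apply monotoneOn_of_deriv_nonneg (convex_Ico _ _)
      · intro x hx
        exact ((hB x hx.2).sub (hdiff x (hsub x hx).1)).continuousAt.continuousWithinAt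
      · intro x hx
        have hx := interior_subset hx
        exact ((hB x hx.2).sub (hdiff x (hsub x hx).1)).differentiableAt.differentiableWithinAt
      · intro x hx
        have hx := interior_subset hx
        rw [((hB x hx.2).fun_sub (hdiff x (hsub x hx).1)).deriv]
        have := (abs_le.1 (h' x (hsub x hx).2)).2
        linarith
    have hm2 : MonotoneOn (fun y => C' / (-p) * (1 - y) ^ p + φ y) (Ico x0 1) := by
      apply monotoneOn_of_deriv_nonneg (convex_Ico _ _)
      · intro x hx
        exact ((hB x hx.2).add (hdiff x (hsub x hx).1)).continuousAt.continuousWithinAt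
      · intro x hx
        have hx := interior_subset hx
        exact ((hB x hx.2).add (hdiff x (hsub x hx).1)).differentiableAt.differentiableWithinAt
      · intro x hx
        have hx := interior_subset hx
        rw [((hB x hx.2).fun_add (hdiff x (hsub x hx).1)).deriv]
        have := (abs_le.1 (h' x (hsub x hx).2)).1
        linarith
    refine ⟨C' / (-p) + |φ x0| + |C' / (-p) * (1 - x0) ^ p|, δ' / 2,
      ⟨by linarith [hδ'.1], by linarith [hδ'.2, hδ'.1]⟩, fun x hx => ?_⟩
    have hxm : x ∈ Ico x0 1 := ⟨hx.1.le, hx.2⟩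
    have e1 := hm1 hx0m hxm hxm.1
    have e2 := hm2 hx0m hxm hxm.1
    simp only at e1 e2
    have hone : 1 ≤ (1 - x) ^ p :=
      Real.one_le_rpow_of_pos_of_le_one_of_nonpos (by linarith [hx.2])
        (by linarith [(hsub x hxm).1.1]) hp.le
    have a1 := abs_le.1 (le_refl |φ x0|)
    have a2 := abs_le.1 (le_refl |C' / (-p) * (1 - x0) ^ p|)
    have a3 : |φ x0| ≤ |φ x0| * (1 - x) ^ p := le_mul_of_one_le_right (abs_nonneg _) hone
    have a4 : |C' / (-p) * (1 - x0) ^ p| ≤ |C' / (-p) * (1 - x0) ^ p| * (1 - x) ^ p :=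
      le_mul_of_one_le_right (abs_nonneg _) hone
    rw [abs_le]
    constructor
    · linarith [a1.1, a2.1]
    · linarith [a1.2, a2.2]

theorem phi_integrable (k : ℕ) (φ : ℝ → ℝ) (hφCk : ContDiffOn ℝ k φ (Ioo 0 1))
    (hφbound : ∃ C > (0:ℝ), ∃ ε > (0:ℝ), ∃ δ ∈ Ioo (0:ℝ) 1,
      ∀ x ∈ Ioo (1 - δ) 1,
        |(1 - x) ^ k * iteratedDerivWithin k φ (Ioo 0 1) x| ≤ C * (1 - x) ^ (-1 + ε))
    (c : ℝ) (hc : 0 < c) : MeasureTheory.IntegrableOn φ (Ioo c 1) := by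
  obtain ⟨C, hC, ε, hε, δ, hδ, h⟩ := hφbound
  set e : ℝ := min ε (1/2) with he
  have he0 : 0 < e := lt_min hε (by norm_num)
  have he1 : e ≤ 1/2 := min_le_right _ _
  have he2 : e ≤ ε := min_le_left _ _
  obtain ⟨C', δ', hδ', h'⟩ := lower_bd k φ (-1 + e) (by linarith) hφCk
    ⟨C, δ, hδ, fun x hx => by
      have hx1 : 0 < 1 - x := by linarith [hx.2]
      have h3 := h x hx
      rw [abs_mul, abs_of_pos (pow_pos hx1 k)] at h3
      rw [Real.rpow_sub hx1, Real.rpow_natCast]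
      rw [← mul_div_assoc, le_div_iff₀ (pow_pos hx1 k), mul_comm]
      refine h3.trans ?_
      refine mul_le_mul_of_nonneg_left ?_ hC.le
      exact Real.rpow_le_rpow_of_exponent_ge hx1 (by linarith [hx.1, hδ.2]) (by linarith)⟩
  have hcont : ContinuousOn φ (Ioo 0 1) := hφCk.continuousOn
  set d : ℝ := 1 - δ' / 2 with hd
  have hd1 := hδ'.1
  have hd2 := hδ'.2
  have i1 : MeasureTheory.IntegrableOn φ (Icc c d) := by
    apply ContinuousOn.integrableOn_Icc
    apply hcont.mono
    intro x hx
    exact ⟨by linarith [hx.1], by linarith [hx.2]⟩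
  have i2 : MeasureTheory.IntegrableOn φ (Ioo (1 - δ') 1) := by
    have hI : IntervalIntegrable (fun x : ℝ => x ^ (-1 + e)) MeasureTheory.volume 0 δ' :=
      intervalIntegral.intervalIntegrable_rpow' (by linarith)
    have hI2 := (hI.comp_sub_left 1).symm
    rw [sub_zero, intervalIntegrable_iff_integrableOn_Ioo_of_le (by linarith)] at hI2
    refine MeasureTheory.Integrable.mono' (hI2.const_mul C') ?_ ?_
    · refine (hcont.mono ?_).aestronglyMeasurable measurableSet_Ioo
      intro x hx
      exact ⟨by linarith [hx.1], by linarith [hx.2]⟩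
    · filter_upwards [MeasureTheory.ae_restrict_mem measurableSet_Ioo] with x hx
      exact h' x hx
  apply (i1.union i2).mono_set
  intro x hx
  by_cases hxd : x ≤ d
  · exact Or.inl ⟨hx.1.le, hxd⟩
  · exact Or.inr ⟨by push Not at hxd; linarith, hx.2⟩

theorem par_meas (p : ℝ) (F : ℝ → ℝ) (hF : Continuous F) :
    MeasureTheory.AEStronglyMeasurable (fun t => F t * t ^ p)
      (MeasureTheory.volume.restrict (uIoc (0:ℝ) 1)) := by
  refine MeasureTheory.AEStronglyMeasurable.mul hF.aestronglyMeasurable ?_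
  exact (measurable_id.pow_const p).aestronglyMeasurable

theorem par_deriv (p q : ℝ) (hq : -1 < q) (F F' : ℝ → ℝ → ℝ)
    (hF : ∀ s, Continuous (F s)) (hF' : ∀ s, Continuous (F' s))
    (hd : ∀ s t, HasDerivAt (fun s => F s t) (F' s t) s)
    (s0 r : ℝ) (hr : 0 < r) (C : ℝ)
    (hb : ∀ s ∈ Metric.ball s0 r, ∀ t ∈ Ioc (0:ℝ) 1, |F' s t * t ^ p| ≤ C * t ^ q)
    (hint : IntervalIntegrable (fun t => F s0 t * t ^ p) MeasureTheory.volume 0 1) :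
    HasDerivAt (fun s => ∫ t in (0:ℝ)..1, F s t * t ^ p) (∫ t in (0:ℝ)..1, F' s0 t * t ^ p) s0 := by
  refine (intervalIntegral.hasDerivAt_integral_of_dominated_loc_of_deriv_le
    (bound := fun t => C * t ^ q) (F' := fun s t => F' s t * t ^ p) (Metric.ball_mem_nhds s0 hr) (Eventually.of_forall fun s => par_meas p _ (hF s))
    hint (par_meas p _ (hF' s0)) ?_ ?_ ?_).2
  · refine Eventually.of_forall fun t ht s hs => ?_
    rw [uIoc_of_le zero_le_one] at ht
    exact hb s hs t ht
  · exact (intervalIntegral.intervalIntegrable_rpow' hq).const_mul C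
  · exact Eventually.of_forall fun t ht s hs => (hd s t).mul_const _

theorem par_cont (p q : ℝ) (hq : -1 < q) (F : ℝ → ℝ → ℝ)
    (hF : ∀ s, Continuous (F s)) (hF2 : ∀ t, Continuous (fun s => F s t))
    (s0 r : ℝ) (hr : 0 < r) (C : ℝ)
    (hb : ∀ s ∈ Metric.ball s0 r, ∀ t ∈ Ioc (0:ℝ) 1, |F s t * t ^ p| ≤ C * t ^ q) :
    ContinuousAt (fun s => ∫ t in (0:ℝ)..1, F s t * t ^ p) s0 := by
  refine intervalIntegral.continuousAt_of_dominated_interval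
    (bound := fun t => C * t ^ q) (Eventually.of_forall fun s => par_meas p _ (hF s)) ?_ ?_ ?_
  · filter_upwards [Metric.ball_mem_nhds s0 hr] with s hs
    refine Eventually.of_forall fun t ht => ?_
    rw [uIoc_of_le zero_le_one] at ht
    exact hb s hs t ht
  · exact (intervalIntegral.intervalIntegrable_rpow' hq).const_mul C
  · exact Eventually.of_forall fun t ht => ((hF2 t).mul_const _).continuousAt

theorem par_int (p q : ℝ) (hq : -1 < q) (F : ℝ → ℝ) (hF : Continuous F) (C : ℝ)
    (hb : ∀ t ∈ Ioc (0:ℝ) 1, |F t * t ^ p| ≤ C * t ^ q) :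
    IntervalIntegrable (fun t => F t * t ^ p) MeasureTheory.volume 0 1 := by
  have h1 : IntervalIntegrable (fun t : ℝ => C * t ^ q) MeasureTheory.volume 0 1 :=
    (intervalIntegral.intervalIntegrable_rpow' hq).const_mul C
  refine h1.mono_fun' (par_meas p _ hF) ?_
  filter_upwards [MeasureTheory.ae_restrict_mem measurableSet_uIoc] with t ht
  rw [uIoc_of_le zero_le_one] at ht
  exact hb t ht

theorem loc_bdd (f : ℝ → ℝ) (hf : Continuous f) (s0 : ℝ) :
    ∃ C, ∀ x ∈ Icc (s0 - 1) (s0 + 2), |f x| ≤ C := by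
  obtain ⟨C, hC⟩ := isCompact_Icc.exists_bound_of_continuousOn (s := Icc (s0 - 1) (s0 + 2))
    hf.continuousOn
  exact ⟨C, hC⟩

theorem loc_bdd' (i : ℝ) (f : ℝ → ℝ) (hf : Continuous f) (s0 : ℝ) :
    ∃ C, ∀ s ∈ Metric.ball s0 1, ∀ t ∈ Ioc (0:ℝ) 1, |f (s + t) * t ^ i| ≤ C * t ^ i := by
  obtain ⟨C, hC⟩ := loc_bdd f hf s0
  refine ⟨C, fun s hs t ht => ?_⟩
  have hs' := abs_lt.1 (by simpa [Real.dist_eq] using hs : |s - s0| < 1)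
  have := hC (s + t) ⟨by linarith [hs'.1, ht.1], by linarith [hs'.2, ht.2]⟩
  rw [abs_mul, abs_of_pos (Real.rpow_pos_of_pos ht.1 i)]
  exact mul_le_mul_of_nonneg_right this (Real.rpow_pos_of_pos ht.1 i).le

noncomputable def Iop (i : ℝ) (f : ℝ → ℝ) (s : ℝ) : ℝ := ∫ t in (0:ℝ)..1, f (s + t) * t ^ i

theorem Iop_cont (i : ℝ) (hi : -1 < i) (f : ℝ → ℝ) (hf : Continuous f) : Continuous (Iop i f) := by
  rw [continuous_iff_continuousAt]
  intro s0
  obtain ⟨C, hC⟩ := loc_bdd' i f hf s0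
  exact par_cont i i hi (fun s t => f (s + t)) (fun s => by fun_prop) (fun t => by fun_prop)
    s0 1 one_pos C hC

theorem Iop_int (i : ℝ) (hi : -1 < i) (f : ℝ → ℝ) (hf : Continuous f) (s0 : ℝ) :
    IntervalIntegrable (fun t => f (s0 + t) * t ^ i) MeasureTheory.volume 0 1 := by
  obtain ⟨C, hC⟩ := loc_bdd' i f hf s0
  exact par_int i i hi (fun t => f (s0 + t)) (by fun_prop) C (hC s0 (by simp))

theorem Iop_deriv (i : ℝ) (hi : -1 < i) (f f' : ℝ → ℝ) (hf : ∀ x, HasDerivAt f (f' x) x)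
    (hf' : Continuous f') (s : ℝ) : HasDerivAt (Iop i f) (Iop i f' s) s := by
  have hc : Continuous f := continuous_iff_continuousAt.2 fun x => (hf x).continuousAt
  obtain ⟨C, hC⟩ := loc_bdd' i f' hf' s
  refine par_deriv i i hi (fun s t => f (s + t)) (fun s t => f' (s + t)) (fun s => by fun_prop)
    (fun t => by fun_prop) ?_ s 1 one_pos C hC (Iop_int i hi f hc s)
  intro s t
  exact (hf (s + t)).comp_add_const s t

theorem Iop_contDiff (i : ℝ) (hi : -1 < i) (k : ℕ) : ∀ f : ℝ → ℝ, ContDiff ℝ k f →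
    ContDiff ℝ k (Iop i f) := by
  induction k with
  | zero =>
    intro f hf
    exact contDiff_zero.2 (Iop_cont i hi f hf.continuous)
  | succ k ih =>
    intro f hf
    have h2 := hf
    push_cast at h2 ⊢
    rw [contDiff_succ_iff_deriv] at h2 ⊢
    obtain ⟨h3, -, h4⟩ := h2
    have hd := Iop_deriv i hi f (deriv f) (fun x => (h3 x).hasDerivAt) h4.continuous
    refine ⟨fun x => (hd x).differentiableAt, by simp, ?_⟩
    have : deriv (Iop i f) = Iop i (deriv f) := funext fun x => (hd x).deriv
    rw [this]
    exact ih _ h4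

/-- linear bound for a primitive -/
theorem prim_lin (F f : ℝ → ℝ) (hF : ∀ x, HasDerivAt F (f x) x) (hf : Continuous f) (s : ℝ) :
    ∃ C, ∀ t ∈ Icc (0:ℝ) 1, |F (s + t) - F s| ≤ C * t := by
  obtain ⟨C, hC⟩ := loc_bdd f hf s
  refine ⟨C, fun t ht => ?_⟩
  have := Convex.norm_image_sub_le_of_norm_hasDerivWithin_le (f := F) (f' := f) (C := C)
    (s := Icc s (s + 1)) (x := s) (y := s + t) (fun x hx => (hF x).hasDerivWithinAt)
    (fun x hx => hC x ⟨by linarith [hx.1], by linarith [hx.2]⟩) (convex_Icc _ _)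
    ⟨le_rfl, by linarith⟩ ⟨by linarith [ht.1], by linarith [ht.2]⟩
  simpa [abs_of_nonneg ht.1] using this

theorem Iop_parts (i : ℝ) (hi : -1 < i) (F f : ℝ → ℝ) (hF : ∀ x, HasDerivAt F (f x) x)
    (hf : Continuous f) (s : ℝ) :
    IntervalIntegrable (fun t => (F (s + t) - F s) * t ^ (i - 1)) MeasureTheory.volume 0 1 ∧
    Iop i f s = F (s + 1) - F s - i * ∫ t in (0:ℝ)..1, (F (s + t) - F s) * t ^ (i - 1) := by
  have hc : Continuous F := continuous_iff_continuousAt.2 fun x => (hF x).continuousAt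
  obtain ⟨C, hC⟩ := prim_lin F f hF hf s
  have I1 : IntervalIntegrable (fun t => (F (s + t) - F s) * t ^ (i - 1))
      MeasureTheory.volume 0 1 := by
    refine par_int (i - 1) i hi (fun t => F (s + t) - F s) (by fun_prop) C fun t ht => ?_
    rw [abs_mul, abs_of_pos (Real.rpow_pos_of_pos ht.1 _)]
    refine (mul_le_mul_of_nonneg_right (hC t ⟨ht.1.le, ht.2⟩)
      (Real.rpow_pos_of_pos ht.1 _).le).trans (le_of_eq ?_)
    have ht0 : t ≠ 0 := ht.1.ne'
    rw [mul_assoc, Real.rpow_sub_one ht0, mul_div_cancel₀ _ ht0]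
  have I2 := Iop_int i hi f hf s
  refine ⟨I1, ?_⟩
  have key := intervalIntegral.integral_eq_sub_of_hasDerivAt_of_le (a := 0) (b := 1)
    (f := fun t => (F (s + t) - F s) * t ^ i)
    (f' := fun t => f (s + t) * t ^ i + i * ((F (s + t) - F s) * t ^ (i - 1))) zero_le_one ?_ ?_
    (I2.add (I1.const_mul i))
  · rw [intervalIntegral.integral_add I2 (I1.const_mul i),
      intervalIntegral.integral_const_mul] at key
    simp at key
    unfold Iop
    linarith
  · intro t ht
    rcases eq_or_lt_of_le ht.1 with h0 | h0
    · subst h0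
      have : Tendsto (fun t : ℝ => C * t ^ (i + 1)) (nhdsWithin 0 (Icc 0 1)) (nhds 0) := by
        have : ContinuousAt (fun t : ℝ => C * t ^ (i + 1)) 0 :=
          ((Real.continuousAt_rpow_const 0 (i + 1) (Or.inr (by linarith))).const_mul C)
        have h2 := this.tendsto
        rw [Real.zero_rpow (by linarith), mul_zero] at h2
        exact h2.mono_left nhdsWithin_le_nhds
      unfold ContinuousWithinAt
      simp only [add_zero, sub_self, zero_mul]
      refine squeeze_zero_norm' ?_ this
      filter_upwards [self_mem_nhdsWithin] with t ht
      rcases eq_or_lt_of_le ht.1 with h1 | h1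
      · subst h1
        simp [Real.zero_rpow (by linarith : i + 1 ≠ 0)]
      · rw [norm_mul, Real.norm_eq_abs, Real.norm_eq_abs, abs_of_pos (Real.rpow_pos_of_pos h1 _),
          Real.rpow_add_one h1.ne']
        have := mul_le_mul_of_nonneg_right (hC t ht) (Real.rpow_pos_of_pos h1 i).le
        linarith
    · refine ContinuousAt.continuousWithinAt (ContinuousAt.mul (by fun_prop) ?_)
      exact Real.continuousAt_rpow_const t i (Or.inl h0.ne')
  · intro t ht
    have h1 : HasDerivAt (fun t => F (s + t) - F s) (f (s + t)) t := by
      exact ((hF (s + t)).comp_const_add s t).sub_const _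
    have h2 := h1.mul (Real.hasDerivAt_rpow_const (p := i) (Or.inl ht.1.ne'))
    refine h2.congr_deriv ?_
    ring

def LH (α : ℝ) (f : ℝ → ℝ) (U : Set ℝ) : Prop :=
  ∀ x ∈ U, ∃ C : ℝ, ∃ V ∈ nhds x, ∀ y ∈ V, ∀ z ∈ V, |f y - f z| ≤ C * |y - z| ^ α

def HC (α : ℝ) : ℕ → (ℝ → ℝ) → Set ℝ → Prop
  | 0, f, U => LH α f U
  | k + 1, f, U => (∀ x ∈ U, DifferentiableAt ℝ f x) ∧ HC α k (deriv f) U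

theorem LH.cont {α : ℝ} (hα : 0 < α) {f : ℝ → ℝ} {U : Set ℝ} (h : LH α f U) :
    ∀ x ∈ U, ContinuousAt f x := by
  intro x hx
  obtain ⟨C, V, hV, hb⟩ := h x hx
  unfold ContinuousAt
  rw [tendsto_iff_norm_sub_tendsto_zero]
  have h1 : Tendsto (fun y : ℝ => C * |y - x| ^ α) (nhds x) (nhds 0) := by
    have : ContinuousAt (fun y : ℝ => C * |y - x| ^ α) x := by
      refine ContinuousAt.const_mul ?_ C
      exact ContinuousAt.rpow_const (by fun_prop) (Or.inr hα.le)
    have h2 := this.tendsto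
    simpa [Real.zero_rpow hα.ne'] using h2
  refine squeeze_zero' (Eventually.of_forall fun y => norm_nonneg _) ?_ h1
  filter_upwards [hV] with y hy
  exact hb y hy x (mem_of_mem_nhds hV)

theorem LH.congr {α : ℝ} {f g : ℝ → ℝ} {U : Set ℝ} (hU : IsOpen U) (h : LH α f U)
    (he : EqOn g f U) : LH α g U := by
  intro x hx
  obtain ⟨C, V, hV, hb⟩ := h x hx
  refine ⟨C, V ∩ U, inter_mem hV (hU.mem_nhds hx), fun y hy z hz => ?_⟩
  rw [he hy.2, he hz.2]
  exact hb y hy.1 z hz.1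

theorem HC.congr {α : ℝ} {U : Set ℝ} (hU : IsOpen U) (k : ℕ) : ∀ {f g : ℝ → ℝ}, HC α k f U →
    EqOn g f U → HC α k g U := by
  induction k with
  | zero => intro f g h he; exact LH.congr hU h he
  | succ k ih =>
    intro f g h he
    have hev : ∀ x ∈ U, g =ᶠ[nhds x] f := fun x hx => he.eventuallyEq_of_mem (hU.mem_nhds hx)
    refine ⟨fun x hx => (hev x hx).differentiableAt_iff.2 (h.1 x hx), ih h.2 fun x hx => ?_⟩
    exact (hev x hx).deriv_eq

theorem small_pow {α : ℝ} (hα : α ≤ 1) {x y z : ℝ} (hy : y ∈ Metric.ball x (1/2))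
    (hz : z ∈ Metric.ball x (1/2)) : |y - z| ≤ |y - z| ^ α := by
  have h1 : |y - z| ≤ 1 := by
    have := dist_triangle_right y z x
    rw [Real.dist_eq] at this
    rw [Metric.mem_ball] at hy hz
    linarith
  rcases eq_or_lt_of_le (abs_nonneg (y - z)) with h0 | h0
  · rw [← h0]; exact Real.rpow_nonneg le_rfl _
  · simpa using Real.rpow_le_rpow_of_exponent_ge h0 h1 hα

theorem LH_of_C1 {α : ℝ} (hα : α ≤ 1) {f : ℝ → ℝ} {U : Set ℝ} 
    (h : ∀ x ∈ U, ContDiffAt ℝ 1 f x) : LH α f U := by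
  intro x hx
  obtain ⟨K, V, hV, hb⟩ := (h x hx).exists_lipschitzOnWith
  refine ⟨K, V ∩ Metric.ball x (1/2), inter_mem hV (Metric.ball_mem_nhds x (by norm_num)),
    fun y hy z hz => ?_⟩
  have := hb.dist_le_mul y hy.1 z hz.1
  rw [Real.dist_eq, Real.dist_eq] at this
  exact this.trans (mul_le_mul_of_nonneg_left (small_pow hα hy.2 hz.2) K.2)

theorem LH.add {α : ℝ} {f g : ℝ → ℝ} {U : Set ℝ} (hf : LH α f U) (hg : LH α g U) :
    LH α (fun x => f x + g x) U := by
  intro x hx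
  obtain ⟨C, V, hV, hb⟩ := hf x hx
  obtain ⟨C', V', hV', hb'⟩ := hg x hx
  refine ⟨C + C', V ∩ V', inter_mem hV hV', fun y hy z hz => ?_⟩
  have h1 := hb y hy.1 z hz.1
  have h2 := hb' y hy.2 z hz.2
  have : f y + g y - (f z + g z) = (f y - f z) + (g y - g z) := by ring
  rw [this]
  refine (abs_add_le _ _).trans ?_
  linarith

theorem LH.mul {α : ℝ} (hα : 0 < α) {f g : ℝ → ℝ} {U : Set ℝ} (hf : LH α f U) (hg : LH α g U) :
    LH α (fun x => f x * g x) U := by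
  intro x hx
  have bd : ∀ {h : ℝ → ℝ}, LH α h U → ∀ᶠ y in nhds x, |h y| ≤ |h x| + 1 := by
    intro h hh
    have := (hh.cont hα x hx).abs
    exact (this.eventually_lt_const (lt_add_one _)).mono fun y hy => hy.le
  obtain ⟨C, V, hV, hb⟩ := hf x hx
  obtain ⟨C', V', hV', hb'⟩ := hg x hx
  refine ⟨(|g x| + 1) * C + (|f x| + 1) * C',
    (V ∩ V') ∩ ({y | |f y| ≤ |f x| + 1} ∩ {y | |g y| ≤ |g x| + 1}),
    inter_mem (inter_mem hV hV') (inter_mem (bd hf) (bd hg)), fun y hy z hz => ?_⟩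
  have h1 := hb y hy.1.1 z hz.1.1
  have h2 := hb' y hy.1.2 z hz.1.2
  have e : f y * g y - f z * g z = g y * (f y - f z) + f z * (g y - g z) := by ring
  rw [e]
  refine (abs_add_le _ _).trans ?_
  rw [abs_mul, abs_mul]
  have b1 : |g y| ≤ |g x| + 1 := hy.2.2
  have b2 : |f z| ≤ |f x| + 1 := hz.2.1
  have := mul_le_mul b1 h1 (abs_nonneg _) (by positivity)
  have := mul_le_mul b2 h2 (abs_nonneg _) (by positivity)
  linarith

theorem LH.comp {α : ℝ} (hα : 0 < α) {f σ : ℝ → ℝ} {U V : Set ℝ} (hf : LH α f U)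
    (hm : ∀ x ∈ V, σ x ∈ U) (hσ : ∀ x ∈ V, ContDiffAt ℝ 1 σ x) : LH α (fun x => f (σ x)) V := by
  intro x hx
  obtain ⟨C, W, hW, hb⟩ := hf (σ x) (hm x hx)
  obtain ⟨K, V', hV', hb'⟩ := (hσ x hx).exists_lipschitzOnWith
  have hC : ∃ V'' ∈ nhds x, ∀ y ∈ V'', σ y ∈ W := ⟨_, (hσ x hx).continuousAt hW, fun y hy => hy⟩
  obtain ⟨V'', hV'', hb''⟩ := hC
  refine ⟨|C| * K ^ α, V' ∩ V'', inter_mem hV' hV'', fun y hy z hz => ?_⟩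
  refine (hb _ (hb'' y hy.2) _ (hb'' z hz.2)).trans ?_
  have := hb'.dist_le_mul y hy.1 z hz.1
  rw [Real.dist_eq, Real.dist_eq] at this
  have h2 := Real.rpow_le_rpow (abs_nonneg _) this hα.le
  rw [Real.mul_rpow K.coe_nonneg (abs_nonneg _)] at h2
  calc C * |σ y - σ z| ^ α ≤ |C| * |σ y - σ z| ^ α :=
        mul_le_mul_of_nonneg_right (le_abs_self C) (Real.rpow_nonneg (abs_nonneg _) _)
    _ ≤ |C| * (K ^ α * |y - z| ^ α) := mul_le_mul_of_nonneg_left h2 (abs_nonneg _)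
    _ = _ := by ring

theorem HC.add {α : ℝ} {U : Set ℝ} (hU : IsOpen U) (k : ℕ) : ∀ {f g : ℝ → ℝ}, HC α k f U →
    HC α k g U → HC α k (fun x => f x + g x) U := by
  induction k with
  | zero => intro f g h he; exact LH.add h he
  | succ k ih =>
    intro f g hf hg
    refine ⟨fun x hx => (hf.1 x hx).add (hg.1 x hx), HC.congr hU k (ih hf.2 hg.2) fun x hx => ?_⟩
    exact deriv_fun_add (hf.1 x hx) (hg.1 x hx)

theorem HC.pred {α : ℝ} (hα : 0 < α) (hα1 : α ≤ 1) {U : Set ℝ} (hU : IsOpen U) (k : ℕ) :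
    ∀ {f : ℝ → ℝ}, HC α (k + 1) f U → HC α k f U := by
  induction k with
  | zero =>
    intro f h
    refine LH_of_C1 hα1 fun x hx => ?_
    have : ContDiffOn ℝ (0 + 1) f U := by
      rw [contDiffOn_succ_iff_deriv_of_isOpen hU]
      refine ⟨fun x hx => (h.1 x hx).differentiableWithinAt, by simp, ?_⟩
      rw [contDiffOn_zero]
      exact fun x hx => (LH.cont hα h.2 x hx).continuousWithinAt
    simpa using this.contDiffAt (hU.mem_nhds hx)
  | succ k ih =>
    intro f h
    exact ⟨h.1, ih h.2⟩

theorem HC.mul {α : ℝ} (hα : 0 < α) (hα1 : α ≤ 1) {U : Set ℝ} (hU : IsOpen U) (k : ℕ) :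
    ∀ {f g : ℝ → ℝ}, HC α k f U → HC α k g U → HC α k (fun x => f x * g x) U := by
  induction k with
  | zero => intro f g h he; exact LH.mul hα h he
  | succ k ih =>
    intro f g hf hg
    refine ⟨fun x hx => (hf.1 x hx).mul (hg.1 x hx), HC.congr hU k
      (HC.add hU k (ih hf.2 (HC.pred hα hα1 hU k hg)) (ih (HC.pred hα hα1 hU k hf) hg.2))
      fun x hx => ?_⟩
    exact deriv_fun_mul (hf.1 x hx) (hg.1 x hx)

theorem HC_smooth {α : ℝ} (hα1 : α ≤ 1) {U : Set ℝ} (hU : IsOpen U) (k : ℕ) :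
    ∀ {f : ℝ → ℝ}, ContDiffOn ℝ (k + 1 : ℕ) f U → HC α k f U := by
  induction k with
  | zero =>
    intro f h
    refine LH_of_C1 hα1 fun x hx => by simpa using h.contDiffAt (hU.mem_nhds hx)
  | succ k ih =>
    intro f h
    have h2 := h
    rw [Nat.cast_succ, contDiffOn_succ_iff_deriv_of_isOpen hU] at h2
    exact ⟨fun x hx => (h2.1 x hx).differentiableAt (hU.mem_nhds hx), ih h2.2.2⟩

theorem HC.comp {α : ℝ} (hα : 0 < α) (hα1 : α ≤ 1) {σ : ℝ → ℝ} {U V : Set ℝ} (hV : IsOpen V)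
    (hm : ∀ x ∈ V, σ x ∈ U) (hσ : ∀ n : ℕ, ContDiffOn ℝ n σ V) (k : ℕ) :
    ∀ {f : ℝ → ℝ}, HC α k f U → HC α k (fun x => f (σ x)) V := by
  have hσ' : ∀ x ∈ V, ContDiffAt ℝ 1 σ x := fun x hx => by
    simpa using (hσ 1).contDiffAt (hV.mem_nhds hx)
  have hσd : ∀ x ∈ V, DifferentiableAt ℝ σ x := fun x hx =>
    (hσ' x hx).differentiableAt (by simp)
  induction k with
  | zero =>
    intro f h
    exact LH.comp hα h hm hσ'
  | succ k ih =>
    intro f h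
    have h3 : ContDiffOn ℝ (k + 1 : ℕ) (deriv σ) V := by
      have := hσ (k + 1 + 1)
      rw [Nat.cast_succ, contDiffOn_succ_iff_deriv_of_isOpen hV] at this
      exact this.2.2
    refine ⟨fun x hx => (h.1 _ (hm x hx)).comp x (hσd x hx), HC.congr hV k
      (HC.mul hα hα1 hV k (ih h.2) (HC_smooth hα1 hV k h3)) fun x hx => ?_⟩
    exact deriv_comp x (h.1 _ (hm x hx)) (hσd x hx)

theorem HC.union {α : ℝ} {U V : Set ℝ} (k : ℕ) : ∀ {f : ℝ → ℝ}, HC α k f U → HC α k f V →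
    HC α k f (U ∪ V) := by
  induction k with
  | zero =>
    intro f h h' x hx
    exact hx.elim (h x) (h' x)
  | succ k ih =>
    intro f h h'
    exact ⟨fun x hx => hx.elim (h.1 x) (h'.1 x), ih h.2 h'.2⟩

theorem HC.contDiffOn {α : ℝ} (hα : 0 < α) {U : Set ℝ} (hU : IsOpen U) (k : ℕ) :
    ∀ {f : ℝ → ℝ}, HC α k f U → ContDiffOn ℝ k f U := by
  induction k with
  | zero =>
    intro f h
    rw [Nat.cast_zero, contDiffOn_zero]
    exact fun x hx => (LH.cont hα h x hx).continuousWithinAt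
  | succ k ih =>
    intro f h
    rw [Nat.cast_succ, contDiffOn_succ_iff_deriv_of_isOpen hU]
    exact ⟨fun x hx => (h.1 x hx).differentiableWithinAt, by simp, ih h.2⟩

theorem HC_of_iter {α : ℝ} {U : Set ℝ} (hU : IsOpen U) (k : ℕ) :
    ∀ {f : ℝ → ℝ}, ContDiffOn ℝ k f U → LH α (iteratedDerivWithin k f U) U → HC α k f U := by
  induction k with
  | zero =>
    intro f _ h
    simpa [HC] using h
  | succ k ih =>
    intro f hf h
    have h2 := hf
    rw [Nat.cast_succ, contDiffOn_succ_iff_deriv_of_isOpen hU] at h2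
    refine ⟨fun x hx => (h2.1 x hx).differentiableAt (hU.mem_nhds hx), ih h2.2.2 ?_⟩
    rw [iteratedDerivWithin_succ'] at h
    refine LH.congr hU h (iteratedDerivWithin_congr fun x hx => ?_)
    exact (derivWithin_of_isOpen hU hx).symm

theorem LH_dom {α : ℝ} (hα : 0 < α) (f : ℝ → ℝ) (h : LH α f univ) (s0 : ℝ) :
    ∃ r > 0, ∃ C, ∀ s ∈ Metric.ball s0 r, ∀ t ∈ Ioc (0:ℝ) 1, |f (s + t) - f s| ≤ C * t ^ α := by
  obtain ⟨C, V, hV, hb⟩ := h s0 (mem_univ _)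
  obtain ⟨r, hr, hrV⟩ := Metric.mem_nhds_iff.1 hV
  have hc : Continuous f := continuous_iff_continuousAt.2 fun x => h.cont hα x (mem_univ _)
  obtain ⟨M, hM⟩ := loc_bdd f hc s0
  set d := min (r / 2) 1 with hd
  have hd0 : 0 < d := lt_min (by linarith) one_pos
  have hd1 : d ≤ 1 := min_le_right _ _
  have hd2 : d ≤ r / 2 := min_le_left _ _
  have hM0 : 0 ≤ M := (abs_nonneg _).trans (hM s0 ⟨by linarith, by linarith⟩)
  have hdp := Real.rpow_pos_of_pos hd0 α
  refine ⟨d, hd0, |C| + 2 * M / d ^ α, fun s hs t ht => ?_⟩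
  have hs' := abs_lt.1 (by simpa [Real.dist_eq] using hs : |s - s0| < d)
  have htp := Real.rpow_pos_of_pos ht.1 α
  have q1 : 0 ≤ 2 * M / d ^ α := by positivity
  by_cases htd : t < d
  · have h1 := hb (s + t) (hrV (by
      rw [Metric.mem_ball, Real.dist_eq, abs_lt]
      constructor <;> linarith [ht.1])) s (hrV (by
      rw [Metric.mem_ball, Real.dist_eq, abs_lt]
      constructor <;> linarith [ht.1]))
    rw [add_sub_cancel_left, abs_of_pos ht.1] at h1
    refine h1.trans (mul_le_mul_of_nonneg_right ?_ htp.le)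
    linarith [le_abs_self C]
  · push Not at htd
    have e1 := hM (s + t) ⟨by linarith [ht.1], by linarith [ht.2]⟩
    have e2 := hM s ⟨by linarith [ht.1], by linarith [ht.2]⟩
    have e3 : d ^ α ≤ t ^ α := Real.rpow_le_rpow hd0.le htd hα.le
    have e4 : 2 * M ≤ 2 * M / d ^ α * t ^ α := by
      rw [div_mul_eq_mul_div, le_div_iff₀ hdp]
      exact mul_le_mul_of_nonneg_left e3 (by linarith)
    have e5 : |f (s + t) - f s| ≤ |f (s + t)| + |f s| := abs_sub _ _
    have e6 : 0 ≤ |C| * t ^ α := by positivity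
    linarith

noncomputable def prim (f : ℝ → ℝ) (s : ℝ) : ℝ := ∫ x in (1:ℝ)..s, f x

theorem prim_deriv (f : ℝ → ℝ) (hf : Continuous f) (x : ℝ) : HasDerivAt (prim f) (f x) x :=
  intervalIntegral.integral_hasDerivAt_right (hf.intervalIntegrable _ _)
    (hf.stronglyMeasurableAtFilter _ _) hf.continuousAt

theorem prim_zero (f : ℝ → ℝ) (hf : ∀ x, 1 ≤ x → f x = 0) (x : ℝ) (hx : 1 ≤ x) :
    prim f x = 0 := by
  unfold prim
  rw [intervalIntegral.integral_congr (g := fun _ => (0:ℝ))]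
  · simp
  · intro y hy
    rw [uIcc_of_le hx] at hy
    exact hf y hy.1

theorem prim_contDiff (k : ℕ) (f : ℝ → ℝ) (hf : ContDiff ℝ k f) :
    ContDiff ℝ (k + 1 : ℕ) (prim f) := by
  have hd := prim_deriv f hf.continuous
  rw [Nat.cast_succ, contDiff_succ_iff_deriv]
  refine ⟨fun x => (hd x).differentiableAt, by simp, ?_⟩
  rwa [show deriv (prim f) = f from funext fun x => (hd x).deriv]

theorem Iop_prim (i : ℝ) (hi : 0 < i) (f : ℝ → ℝ) (hf : Continuous f)
    (hz : ∀ x, 1 ≤ x → f x = 0) (s : ℝ) (hs : 0 < s) :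
    Iop i f s = - i * Iop (i - 1) (prim f) s := by
  have hd := prim_deriv f hf
  have hc : Continuous (prim f) := continuous_iff_continuousAt.2 fun x => (hd x).continuousAt
  rw [(Iop_parts i (by linarith) (prim f) f hd hf s).2, prim_zero f hz (s + 1) (by linarith)]
  have : ∫ t in (0:ℝ)..1, (prim f (s + t) - prim f s) * t ^ (i - 1)
      = Iop (i - 1) (prim f) s - prim f s / i := by
    unfold Iop
    simp only [sub_mul]
    rw [intervalIntegral.integral_sub (Iop_int (i - 1) (by linarith) _ hc s)
      ((intervalIntegral.intervalIntegrable_rpow' (by linarith)).const_mul _),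
      intervalIntegral.integral_const_mul, integral_rpow (Or.inl (by linarith))]
    simp [Real.zero_rpow hi.ne']
    ring
  rw [this]
  field_simp
  ring

theorem Iop_zero (f : ℝ → ℝ) (hf : Continuous f)
    (hz : ∀ x, 1 ≤ x → f x = 0) (s : ℝ) (hs : 0 < s) :
    Iop 0 f s = - prim f s := by
  have hd := prim_deriv f hf
  rw [(Iop_parts 0 (by linarith) (prim f) f hd hf s).2, prim_zero f hz (s + 1) (by linarith)]
  simp

theorem Iop_reg1 (n : ℕ) : ∀ (i : ℝ) (k : ℕ) (f : ℝ → ℝ), -1 < i → (n:ℝ) - 1 ≤ i → i < n →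
    ContDiff ℝ k f → (∀ x, 1 ≤ x → f x = 0) →
    ContDiffOn ℝ (n + k : ℕ) (Iop i f) (Ioi 0) := by
  induction n with
  | zero =>
    intro i k f hi _ _ hf _
    rw [zero_add]
    exact (Iop_contDiff i hi k f hf).contDiffOn
  | succ n ih =>
    intro i k f hi h1 h2 hf hz
    push_cast at h1 h2
    have hn : (0:ℝ) ≤ n := Nat.cast_nonneg n
    rcases eq_or_lt_of_le (by linarith : 0 ≤ i) with h0 | h0
    · subst h0
      have hn0 : n = 0 := by
        have : (n:ℝ) ≤ 0 := by linarith
        exact_mod_cast le_antisymm this hn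
      subst hn0
      have e : 0 + 1 + k = k + 1 := by ring
      rw [e]
      exact (prim_contDiff k f hf).neg.contDiffOn.congr fun s hs => Iop_zero f hf.continuous hz s hs
    · have := ih (i - 1) (k + 1) (prim f) (by linarith) (by linarith) (by linarith)
        (prim_contDiff k f hf) (prim_zero f hz)
      have e : n + 1 + k = n + (k + 1) := by ring
      rw [e]
      exact (contDiffOn_const.mul this).congr fun s hs => Iop_prim i h0 f hf.continuous hz s hs

theorem Iop_reg2_base {α : ℝ} (hα : 0 < α) (i : ℝ) (hi : -1 < i) (hiα : 0 < α + i) (f : ℝ → ℝ)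
    (hf : LH α f univ) : ContDiff ℝ 1 (Iop i f) := by
  have hc : Continuous f := continuous_iff_continuousAt.2 fun x => hf.cont hα x (mem_univ _)
  have hd := prim_deriv f hc
  have hpc : Continuous (prim f) := continuous_iff_continuousAt.2 fun x => (hd x).continuousAt
  have hI : Iop i f = fun s => prim f (s + 1) - prim f s -
      i * ∫ t in (0:ℝ)..1, (prim f (s + t) - prim f s) * t ^ (i - 1) :=
    funext fun s => (Iop_parts i hi (prim f) f hd hc s).2
  have hdom : ∀ s0, ∃ r > 0, ∃ C, ∀ s ∈ Metric.ball s0 r, ∀ t ∈ Ioc (0:ℝ) 1,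
      |(f (s + t) - f s) * t ^ (i - 1)| ≤ C * t ^ (α + i - 1) := by
    intro s0
    obtain ⟨r, hr, C, hC⟩ := LH_dom hα f hf s0
    refine ⟨r, hr, C, fun s hs t ht => ?_⟩
    rw [abs_mul, abs_of_pos (Real.rpow_pos_of_pos ht.1 _)]
    refine (mul_le_mul_of_nonneg_right (hC s hs t ht)
      (Real.rpow_pos_of_pos ht.1 _).le).trans (le_of_eq ?_)
    rw [mul_assoc, ← Real.rpow_add ht.1]
    congr 2; ring
  have hD : ∀ s, HasDerivAt (Iop i f) (f (s + 1) - f s -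
      i * ∫ t in (0:ℝ)..1, (f (s + t) - f s) * t ^ (i - 1)) s := by
    intro s
    rw [hI]
    obtain ⟨r, hr, C, hC⟩ := hdom s
    have := par_deriv (i - 1) (α + i - 1) (by linarith) (fun s t => prim f (s + t) - prim f s)
      (fun s t => f (s + t) - f s) (fun s => by fun_prop) (fun s => by fun_prop)
      (fun s t => ((hd (s + t)).comp_add_const s t).sub (hd s)) s r hr C hC
      (Iop_parts i hi (prim f) f hd hc s).1
    exact (((hd (s + 1)).comp_add_const s 1).sub (hd s)).sub (this.const_mul i)
  rw [show (1 : WithTop ℕ∞) = 0 + 1 by simp, contDiff_succ_iff_deriv]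
  refine ⟨fun x => (hD x).differentiableAt, by simp, ?_⟩
  rw [show deriv (Iop i f) = _ from funext fun x => (hD x).deriv, contDiff_zero]
  refine Continuous.sub (by fun_prop) (Continuous.const_mul ?_ i)
  rw [continuous_iff_continuousAt]
  intro s
  obtain ⟨r, hr, C, hC⟩ := hdom s
  exact par_cont (i - 1) (α + i - 1) (by linarith) (fun s t => f (s + t) - f s)
    (fun s => by fun_prop) (fun s => by fun_prop) s r hr C hC

theorem Iop_reg2_zero {α : ℝ} (hα : 0 < α) (i : ℝ) (hi : -1 < i) (hiα : 0 < α + i) (k : ℕ) :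
    ∀ (f : ℝ → ℝ), HC α k f univ → ContDiff ℝ (k + 1 : ℕ) (Iop i f) := by
  induction k with
  | zero => intro f hf; simpa using Iop_reg2_base hα i hi hiα f hf
  | succ k ih =>
    intro f hf
    have h3 : ContDiff ℝ k (deriv f) := contDiffOn_univ.1 (HC.contDiffOn hα isOpen_univ k hf.2)
    have hd := Iop_deriv i hi f (deriv f) (fun x => (hf.1 x (mem_univ _)).hasDerivAt) h3.continuous
    rw [Nat.cast_succ, contDiff_succ_iff_deriv]
    refine ⟨fun x => (hd x).differentiableAt, by simp, ?_⟩
    rw [show deriv (Iop i f) = Iop i (deriv f) from funext fun x => (hd x).deriv]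
    exact ih _ hf.2

theorem Iop_reg2 {α : ℝ} (hα : 0 < α) (n : ℕ) : ∀ (i : ℝ) (k : ℕ) (f : ℝ → ℝ), -1 < i →
    (n:ℝ) - 1 < i → n < α + i →
    HC α k f univ → (∀ x, 1 ≤ x → f x = 0) →
    ContDiffOn ℝ (n + k + 1 : ℕ) (Iop i f) (Ioi 0) := by
  induction n with
  | zero =>
    intro i k f hi _ h2 hf _
    rw [zero_add]
    exact (Iop_reg2_zero hα i hi (by simpa using h2) k f hf).contDiffOn
  | succ n ih =>
    intro i k f hi h1 h2 hf hz
    push_cast at h1 h2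
    have hn : (0:ℝ) ≤ n := Nat.cast_nonneg n
    have hc : ContDiff ℝ k f := contDiffOn_univ.1 (HC.contDiffOn hα isOpen_univ k hf)
    have hd := prim_deriv f hc.continuous
    have hp : HC α (k + 1) (prim f) univ := by
      refine ⟨fun x _ => (hd x).differentiableAt, ?_⟩
      rwa [show deriv (prim f) = f from funext fun x => (hd x).deriv]
    have := ih (i - 1) (k + 1) (prim f) (by linarith) (by linarith) (by linarith)
        hp (prim_zero f hz)
    have e : n + 1 + k + 1 = n + (k + 1) + 1 := by ring
    rw [e]
    exact (contDiffOn_const.mul this).congr fun s hs =>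
      Iop_prim i (by linarith) f hc.continuous hz s hs

theorem J_deriv (b : ℝ) (q : ℝ → ℝ) (hq : MeasureTheory.IntegrableOn q (Ioo b 1)) (i s0 : ℝ)
    (hs : s0 < b) : HasDerivAt (fun s => ∫ u in Ioo b 1, q u * (u - s) ^ i)
      (∫ u in Ioo b 1, q u * ((-i) * (u - s0) ^ (i - 1))) s0 := by
  set ρ := (b - s0) / 2 with hρ
  have hρ0 : 0 < ρ := by linarith
  have bd : ∀ j : ℝ, ∃ M, ∀ s ∈ Metric.ball s0 ρ, ∀ u ∈ Ioo b 1, |(u - s) ^ j| ≤ M := by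
    intro j
    obtain ⟨M, hM⟩ := isCompact_Icc.exists_bound_of_continuousOn (s := Icc ρ (1 - s0 + ρ))
      (f := fun x : ℝ => x ^ j) (fun x hx => (Real.continuousAt_rpow_const x j
        (Or.inl (by linarith [hx.1]))).continuousWithinAt)
    refine ⟨M, fun s hs u hu => ?_⟩
    have hs' := abs_lt.1 (by simpa [Real.dist_eq] using hs : |s - s0| < ρ)
    exact hM (u - s) ⟨by linarith [hu.1], by linarith [hu.2]⟩
  have meas : ∀ j s : ℝ, MeasureTheory.AEStronglyMeasurable (fun u : ℝ => (u - s) ^ j)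
      (MeasureTheory.volume.restrict (Ioo b 1)) := fun j s =>
    ((measurable_id.sub_const s).pow_const j).aestronglyMeasurable
  obtain ⟨M0, hM0⟩ := bd i
  obtain ⟨M, hM⟩ := bd (i - 1)
  refine (hasDerivAt_integral_of_dominated_loc_of_deriv_le
    (bound := fun u => |q u| * (|i| * M)) (F := fun s u => q u * (u - s) ^ i)
    (F' := fun s u => q u * ((-i) * (u - s) ^ (i - 1)))
    (Metric.ball_mem_nhds s0 hρ0) (Eventually.of_forall fun s => hq.1.mul (meas i s)) ?_ ?_ ?_ ?_ ?_).2
  · refine MeasureTheory.Integrable.mul_bdd (c := M0) hq (meas i s0) ?_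
    filter_upwards [MeasureTheory.ae_restrict_mem measurableSet_Ioo] with u hu
    exact hM0 s0 (Metric.mem_ball_self hρ0) u hu
  · exact hq.1.mul ((meas (i - 1) s0).const_mul (-i))
  · filter_upwards [MeasureTheory.ae_restrict_mem measurableSet_Ioo] with u hu s hs
    rw [Real.norm_eq_abs, abs_mul, abs_mul, abs_neg]
    exact mul_le_mul_of_nonneg_left (mul_le_mul_of_nonneg_left (hM s hs u hu) (abs_nonneg _))
      (abs_nonneg _)
  · exact hq.norm.mul_const _
  · filter_upwards [MeasureTheory.ae_restrict_mem measurableSet_Ioo] with u hu s hs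
    have hs' := abs_lt.1 (by simpa [Real.dist_eq] using hs : |s - s0| < ρ)
    have h2 : HasDerivAt (fun y : ℝ => u - y) (-1) s := by
      simpa using (hasDerivAt_id s).const_sub u
    have := (h2.rpow_const (p := i) (Or.inl (by linarith [hu.1] : u - s ≠ 0))).const_mul (q u)
    refine this.congr_deriv ?_
    ring

theorem J_smooth (b : ℝ) (q : ℝ → ℝ) (hq : MeasureTheory.IntegrableOn q (Ioo b 1)) (n : ℕ) :
    ∀ i : ℝ, ContDiffOn ℝ n (fun s => ∫ u in Ioo b 1, q u * (u - s) ^ i) (Iio b) := by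
  induction n with
  | zero =>
    intro i
    rw [Nat.cast_zero, contDiffOn_zero]
    exact fun s hs => (J_deriv b q hq i s hs).continuousAt.continuousWithinAt
  | succ n ih =>
    intro i
    rw [Nat.cast_succ, contDiffOn_succ_iff_deriv_of_isOpen isOpen_Iio]
    refine ⟨fun s hs => (J_deriv b q hq i s hs).differentiableAt.differentiableWithinAt,
      by simp, ?_⟩
    refine (contDiffOn_const (c := -i) |>.mul (ih (i - 1))).congr fun s hs => ?_
    rw [(J_deriv b q hq i s hs).deriv, ← MeasureTheory.integral_const_mul]
    congr 1
    ext u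
    ring

theorem cut_contDiff (k : ℕ) (χ ψ : ℝ → ℝ) (hχ : ∀ n : ℕ, ContDiff ℝ n χ)
    (hs : tsupport χ ⊆ Ioo 0 1) (hψ : ContDiffOn ℝ k ψ (Ioo 0 1)) :
    ContDiff ℝ k (fun u => χ u * ψ u) := by
  rw [contDiff_iff_contDiffAt]
  intro x
  by_cases hx : x ∈ Ioo (0:ℝ) 1
  · exact (hχ k).contDiffAt.mul (hψ.contDiffAt (isOpen_Ioo.mem_nhds hx))
  · have h1 : x ∉ tsupport χ := fun h => hx (hs h)
    have h2 := notMem_tsupport_iff_eventuallyEq.1 h1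
    refine (contDiffAt_const (c := (0:ℝ))).congr_of_eventuallyEq ?_
    filter_upwards [h2] with y hy
    simp [hy]

theorem cut_HC {α : ℝ} (hα : 0 < α) (hα1 : α ≤ 1) (k : ℕ) (χ ψ : ℝ → ℝ)
    (hχ : ∀ n : ℕ, ContDiff ℝ n χ)
    (hs : tsupport χ ⊆ Ioo 0 1) (hψ : HC α k ψ (Ioo 0 1)) :
    HC α k (fun u => χ u * ψ u) univ := by
  have h1 : HC α k (fun u => χ u * ψ u) (Ioo 0 1) :=
    HC.mul hα hα1 isOpen_Ioo k (HC_smooth hα1 isOpen_Ioo k (hχ _).contDiffOn) hψ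
  have ho : IsOpen (tsupport χ)ᶜ := (isClosed_tsupport χ).isOpen_compl
  have h2 : HC α k (fun u => χ u * ψ u) (tsupport χ)ᶜ := by
    refine HC.congr ho k (HC_smooth (f := fun _ => 0) hα1 ho k contDiffOn_const) fun x hx => ?_
    simp [image_eq_zero_of_notMem_tsupport hx]
  have h3 := HC.union k h1 h2
  have e : Ioo 0 1 ∪ (tsupport χ)ᶜ = univ := by
    rw [eq_univ_iff_forall]
    intro x
    by_cases hx : x ∈ tsupport χ
    · exact Or.inl (hs hx)
    · exact Or.inr hx
  rwa [e] at h3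

theorem local_split (ψ : ℝ → ℝ) (hψc : ContinuousOn ψ (Ioo 0 1))
    (hint : ∀ c > 0, MeasureTheory.IntegrableOn ψ (Ioo c 1)) (i : ℝ) (hi : -1 < i) (s0 : ℝ)
    (hs0 : s0 ∈ Ioo (0:ℝ) 1) :
    ∃ χ : ℝ → ℝ, (∀ n : ℕ, ContDiff ℝ n χ) ∧ tsupport χ ⊆ Ioo 0 1 ∧
      ∀ n : ℕ, ContDiffOn ℝ n (Iop i (fun u => χ u * ψ u)) (Ioi 0) →
        ContDiffAt ℝ n (fun s => ∫ u in Ioo s 1, ψ u * (u - s) ^ i) s0 := by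
  set m := min s0 (1 - s0) with hm
  have hm0 : 0 < m := lt_min hs0.1 (by linarith [hs0.2])
  have hm1 : m ≤ s0 := min_le_left _ _
  have hm2 : m ≤ 1 - s0 := min_le_right _ _
  let χ : ContDiffBump s0 := ⟨m / 4, m / 2, by linarith, by linarith⟩
  have hsupp : tsupport χ ⊆ Ioo 0 1 := by
    rw [χ.tsupport_eq]
    intro x hx
    have hx' : |x - s0| ≤ m / 2 := by simpa [Real.dist_eq] using hx
    rw [abs_le] at hx'
    exact ⟨by linarith, by linarith⟩
  have hχ : ∀ n : ℕ, ContDiff ℝ n χ := fun n => χ.contDiff (n := n)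
  refine ⟨χ, hχ, hsupp, fun n hn => ?_⟩
  have hfc : Continuous (fun u => χ u * ψ u) :=
    (cut_contDiff 0 χ ψ hχ hsupp (by simpa using hψc)).continuous
  have hf0 : ∀ x, 1 ≤ x → χ x * ψ x = 0 := by
    intro x hx
    rw [image_eq_zero_of_notMem_tsupport (fun h => absurd (hsupp h).2 (by linarith)), zero_mul]
  set b := s0 + m / 4 with hb
  set q : ℝ → ℝ := fun u => (1 - χ u) * ψ u with hq
  have hχb : ∀ u, ‖1 - χ u‖ ≤ 1 := by
    intro u
    rw [Real.norm_eq_abs, abs_le]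
    constructor <;> linarith [χ.nonneg (x := u), χ.le_one (x := u)]
  have hχm : ∀ μ : MeasureTheory.Measure ℝ,
      MeasureTheory.AEStronglyMeasurable (fun u => 1 - χ u) μ := fun μ =>
    (continuous_const.sub (hχ 0).continuous).aestronglyMeasurable
  have hqi : MeasureTheory.IntegrableOn q (Ioo b 1) := by
    have := MeasureTheory.Integrable.bdd_mul (c := 1) (hint b (by linarith)) (hχm _)
      (Eventually.of_forall hχb)
    exact this
  have hq0 : ∀ u, s0 - m / 4 ≤ u → u ≤ b → q u = 0 := by
    intro u h1 h2
    have : χ u = 1 := χ.one_of_mem_closedBall (by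
      rw [Metric.mem_closedBall, Real.dist_eq, abs_le]
      constructor
      · change -(m / 4) ≤ _
        linarith
      · change _ ≤ m / 4
        linarith)
    simp [hq, this]
  have hJ := J_smooth b q hqi n i
  have hsum : ContDiffAt ℝ n (fun s => Iop i (fun u => χ u * ψ u) s +
      ∫ u in Ioo b 1, q u * (u - s) ^ i) s0 :=
    (hn.contDiffAt (Ioi_mem_nhds hs0.1)).add
      (hJ.contDiffAt (Iio_mem_nhds (by linarith)))
  refine hsum.congr_of_eventuallyEq ?_
  filter_upwards [Ioo_mem_nhds (by linarith : s0 - m / 4 < s0) (by linarith : s0 < b)] with s hs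
  have hb1 : b < 1 := by linarith
  -- first piece
  have I0 : IntervalIntegrable (fun u => χ u * ψ u * (u - s) ^ i) MeasureTheory.volume s (s + 1) := by
    have := (Iop_int i hi _ hfc s).comp_sub_right s
    simp only [add_sub_cancel, zero_add] at this
    rwa [add_comm 1 s] at this
  have I1 : MeasureTheory.IntegrableOn (fun u => χ u * ψ u * (u - s) ^ i) (Ioo s 1) := by
    rw [intervalIntegrable_iff_integrableOn_Ioo_of_le (by linarith)] at I0
    exact I0.mono_set (Ioo_subset_Ioo le_rfl (by linarith [hs.1]))
  have E1 : Iop i (fun u => χ u * ψ u) s = ∫ u in Ioo s 1, χ u * ψ u * (u - s) ^ i := by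
    have e1 : Iop i (fun u => χ u * ψ u) s = ∫ u in s..(s + 1), χ u * ψ u * (u - s) ^ i := by
      have := intervalIntegral.integral_comp_add_left (a := 0) (b := 1)
        (fun u => χ u * ψ u * (u - s) ^ i) s
      simp only [add_sub_cancel_left, add_zero] at this
      exact this
    rw [e1, intervalIntegral.integral_of_le (by linarith)]
    refine (MeasureTheory.setIntegral_eq_of_subset_of_forall_sdiff_eq_zero measurableSet_Ioc
      (fun x hx => ⟨hx.1, by linarith [hx.2, hs.1]⟩) ?_)
    intro x hx
    have : 1 ≤ x := by
      by_contra hlt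
      push Not at hlt
      exact hx.2 ⟨hx.1.1, hlt⟩
    rw [hf0 x this, zero_mul]
  -- second piece
  have hz : ∀ x ∈ Ioo s 1 \ Ioo b 1, q x * (x - s) ^ i = 0 := by
    intro x hx
    have : x ≤ b := by
      by_contra hlt
      push Not at hlt
      exact hx.2 ⟨hlt, hx.1.2⟩
    rw [hq0 x (by linarith [hx.1.1, hs.1]) this, zero_mul]
  have hsub : Ioo b 1 ⊆ Ioo s 1 := Ioo_subset_Ioo hs.2.le le_rfl
  have E2 : ∫ u in Ioo s 1, q u * (u - s) ^ i = ∫ u in Ioo b 1, q u * (u - s) ^ i :=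
    MeasureTheory.setIntegral_eq_of_subset_of_forall_sdiff_eq_zero measurableSet_Ioo hsub hz
  have I2' : MeasureTheory.IntegrableOn (fun u => q u * (u - s) ^ i) (Ioo b 1) := by
    obtain ⟨M, hM⟩ := isCompact_Icc.exists_bound_of_continuousOn (s := Icc (b - s) (1 - s))
      (f := fun x : ℝ => x ^ i) (fun x hx => (Real.continuousAt_rpow_const x i
        (Or.inl (by linarith [hx.1, hs.2]))).continuousWithinAt)
    refine MeasureTheory.Integrable.mul_bdd (c := M) hqi
      ((measurable_id.sub_const s).pow_const i).aestronglyMeasurable ?_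
    filter_upwards [MeasureTheory.ae_restrict_mem measurableSet_Ioo] with u hu
    exact hM (u - s) ⟨by linarith [hu.1], by linarith [hu.2]⟩
  have I2 : MeasureTheory.IntegrableOn (fun u => q u * (u - s) ^ i) (Ioo s 1) :=
    I2'.of_forall_sdiff_eq_zero measurableSet_Ioo hz
  rw [E1, ← E2, ← MeasureTheory.integral_add I1 I2]
  congr 1
  ext u
  simp only [hq]
  ring

/-- the density in the variable `u = E^2` -/
noncomputable def psi (φ : ℝ → ℝ) (u : ℝ) : ℝ := φ (√u) * (1 / (2 * √u))

theorem sq_image (a : ℝ) (ha : 0 ≤ a) : (fun E : ℝ => E ^ 2) '' Ioo a 1 = Ioo (a ^ 2) 1 := by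
  ext u
  constructor
  · rintro ⟨E, hE, rfl⟩
    have := hE.1; have := hE.2
    exact ⟨by dsimp only; nlinarith, by dsimp only; nlinarith⟩
  · intro hu
    have hu0 : 0 ≤ u := (sq_nonneg a).trans hu.1.le
    refine ⟨√u, ⟨Real.lt_sqrt_of_sq_lt hu.1, ?_⟩, Real.sq_sqrt hu0⟩
    rw [Real.sqrt_lt' one_pos]
    simpa using hu.2

theorem sq_deriv (a x : ℝ) : HasDerivWithinAt (fun E : ℝ => E ^ 2) (2 * x) (Ioo a 1) x := by
  simpa using (hasDerivAt_pow 2 x).hasDerivWithinAt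

theorem sq_inj (a : ℝ) (ha : 0 ≤ a) : InjOn (fun E : ℝ => E ^ 2) (Ioo a 1) := by
  intro x hx y hy h
  exact (sq_eq_sq₀ (ha.trans hx.1.le) (ha.trans hy.1.le)).1 h

theorem psi_sq (φ : ℝ → ℝ) (E : ℝ) (hE : 0 < E) : |2 * E| * psi φ (E ^ 2) = φ E := by
  unfold psi
  rw [Real.sqrt_sq hE.le, abs_of_pos (by linarith)]
  field_simp

theorem psi_int (φ : ℝ → ℝ) (h : ∀ c > 0, MeasureTheory.IntegrableOn φ (Ioo c 1)) (c : ℝ)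
    (hc : 0 < c) : MeasureTheory.IntegrableOn (psi φ) (Ioo c 1) := by
  have hs := Real.sqrt_pos.2 hc
  have := (MeasureTheory.integrableOn_image_iff_integrableOn_abs_deriv_smul
    (s := Ioo (√c) 1) (f := fun E : ℝ => E ^ 2) (f' := fun x => 2 * x) measurableSet_Ioo
    (fun x _ => sq_deriv _ x) (sq_inj _ hs.le) (psi φ)).2 ?_
  · rwa [sq_image _ hs.le, Real.sq_sqrt hc.le] at this
  · refine (h _ hs).congr_fun (fun E hE => ?_) measurableSet_Ioo
    exact (psi_sq φ E (hs.trans hE.1)).symm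

theorem gfun_eq (φ : ℝ → ℝ) (i η : ℝ) (hη : 0 < η) :
    gfun φ i η = (1 / 2) ^ i *
      (fun s => ∫ u in Ioo s 1, psi φ u * (u - s) ^ i) (Real.exp (-2 * η)) := by
  have ha := Real.exp_pos (-η)
  have ha1 : Real.exp (-η) < 1 := by rw [Real.exp_lt_one_iff]; linarith
  have e : Real.exp (-2 * η) = Real.exp (-η) ^ 2 := by
    rw [← Real.exp_nat_mul]; congr 1; push_cast; ring
  unfold gfun
  rw [e]
  try dsimp only
  rw [← sq_image _ ha.le, MeasureTheory.integral_image_eq_integral_abs_deriv_smul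
    (s := Ioo (Real.exp (-η)) 1) (f := fun E : ℝ => E ^ 2) (f' := fun x => 2 * x) measurableSet_Ioo
    (fun x _ => sq_deriv _ x) (sq_inj _ ha.le), intervalIntegral.integral_of_le ha1.le,
    MeasureTheory.integral_Ioc_eq_integral_Ioo, ← MeasureTheory.integral_const_mul]
  refine MeasureTheory.setIntegral_congr_fun measurableSet_Ioo fun E hE => ?_
  have hE0 : 0 < E := ha.trans hE.1
  have hpos : 0 ≤ E ^ 2 - Real.exp (-η) ^ 2 := by nlinarith [hE.1]
  try dsimp only
  rw [smul_eq_mul, ← mul_assoc |2 * E|, psi_sq φ E hE0, div_eq_mul_one_div,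
    Real.mul_rpow hpos (by norm_num)]
  ring

theorem gfun_contDiffOn (φ : ℝ → ℝ) (i : ℝ) (n : ℕ)
    (h : ∀ s0 ∈ Ioo (0:ℝ) 1,
      ContDiffAt ℝ n (fun s => ∫ u in Ioo s 1, psi φ u * (u - s) ^ i) s0) :
    ContDiffOn ℝ n (gfun φ i) (Ioi 0) := by
  have h1 : ContDiffOn ℝ n (fun η => (1 / 2) ^ i *
      (fun s => ∫ u in Ioo s 1, psi φ u * (u - s) ^ i) (Real.exp (-2 * η))) (Ioi 0) := by
    intro η hη
    have hη' : (0:ℝ) < η := hη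
    refine ContDiffAt.contDiffWithinAt (contDiffAt_const.mul ?_)
    refine ContDiffAt.comp (f := fun η : ℝ => Real.exp (-2 * η)) η (h _ ⟨Real.exp_pos _, ?_⟩) ?_
    · rw [Real.exp_lt_one_iff]; linarith
    · fun_prop
  exact h1.congr fun η hη => gfun_eq φ i η hη

theorem sqrt_maps : ∀ x ∈ Ioo (0:ℝ) 1, √x ∈ Ioo (0:ℝ) 1 := fun x hx =>
  ⟨Real.sqrt_pos.2 hx.1, by rw [Real.sqrt_lt' one_pos]; simpa using hx.2⟩

theorem sqrt_smooth (n : ℕ) : ContDiffOn ℝ n (fun x : ℝ => √x) (Ioo 0 1) := fun x hx =>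
  (Real.contDiffAt_sqrt hx.1.ne').contDiffWithinAt

theorem sqrt_inv_smooth (n : ℕ) : ContDiffOn ℝ n (fun x : ℝ => 1 / (2 * √x)) (Ioo 0 1) :=
  contDiffOn_const.div (contDiffOn_const.mul (sqrt_smooth n)) fun x hx => by
    have := Real.sqrt_pos.2 hx.1
    positivity

theorem psi_contDiffOn (k : ℕ) (φ : ℝ → ℝ) (h : ContDiffOn ℝ k φ (Ioo 0 1)) :
    ContDiffOn ℝ k (psi φ) (Ioo 0 1) :=
  (h.comp (sqrt_smooth k) sqrt_maps).mul (sqrt_inv_smooth k)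

theorem psi_HC {α : ℝ} (hα : 0 < α) (hα1 : α ≤ 1) (k : ℕ) (φ : ℝ → ℝ) (h : HC α k φ (Ioo 0 1)) :
    HC α k (psi φ) (Ioo 0 1) :=
  HC.mul hα hα1 isOpen_Ioo k (HC.comp hα hα1 isOpen_Ioo sqrt_maps sqrt_smooth k h)
    (HC_smooth hα1 isOpen_Ioo k (sqrt_inv_smooth _))

theorem stmt12
    (k : ℕ) (φ : ℝ → ℝ)
    (hφnonneg : ∀ x ∈ Ioo (0:ℝ) 1, 0 ≤ φ x)
    (hφCk : ContDiffOn ℝ k φ (Ioo 0 1))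
    (hφbound : ∃ C > (0:ℝ), ∃ ε > (0:ℝ), ∃ δ ∈ Ioo (0:ℝ) 1,
      ∀ x ∈ Ioo (1 - δ) 1,
        |(1 - x) ^ k * iteratedDerivWithin k φ (Ioo 0 1) x| ≤ C * (1 - x) ^ (-1 + ε)) :
    (∀ i : ℝ, -1 < i →
      ContDiffOn ℝ ((⌊i⌋ + k + 1).toNat) (gfun φ i) (Ioi 0)) ∧
    (∀ i : ℝ, -1 < i → (∀ j : ℕ, (j : ℝ) ≠ i) → ∀ α : ℝ, 1 + ⌊i⌋ - i < α →
      ∀ Cα : ℝ,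
      (∀ x ∈ Ioo (0:ℝ) 1, ∀ y ∈ Ioo (0:ℝ) 1,
        |(1 - x) ^ k * iteratedDerivWithin k φ (Ioo 0 1) x -
          (1 - y) ^ k * iteratedDerivWithin k φ (Ioo 0 1) y| ≤ Cα * |x - y| ^ α) →
      ContDiffOn ℝ ((⌊i⌋ + k + 2).toNat) (gfun φ i) (Ioi 0)) := by
  have hint := psi_int φ (fun c hc => phi_integrable k φ hφCk hφbound c hc)
  have hψ := psi_contDiffOn k φ hφCk
  have hfl : ∀ i : ℝ, -1 < i → ∃ n : ℕ, ⌊i⌋ = (n : ℤ) - 1 ∧ (⌊i⌋ : ℝ) = (n : ℝ) - 1 := by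
    intro i hi
    have h1 : -1 ≤ ⌊i⌋ := Int.le_floor.2 (by push_cast; exact hi.le)
    obtain ⟨n, hn⟩ := Int.eq_ofNat_of_zero_le (by linarith : 0 ≤ ⌊i⌋ + 1)
    have h2 : ⌊i⌋ = (n : ℤ) - 1 := by omega
    refine ⟨n, h2, ?_⟩
    rw [h2]; push_cast; ring
  have hzero : ∀ χ : ℝ → ℝ, tsupport χ ⊆ Ioo 0 1 → ∀ x, 1 ≤ x → χ x * psi φ x = 0 := by
    intro χ hs x hx
    rw [image_eq_zero_of_notMem_tsupport (fun h => absurd (hs h).2 (by linarith)), zero_mul]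
  constructor
  · intro i hi
    obtain ⟨n, hn, hn'⟩ := hfl i hi
    have e : (⌊i⌋ + k + 1).toNat = n + k := by rw [hn]; omega
    rw [e]
    refine gfun_contDiffOn φ i _ fun s0 hs0 => ?_
    obtain ⟨χ, hχ, hs, hmain⟩ := local_split (psi φ) hψ.continuousOn hint i hi s0 hs0
    have f1 := Int.floor_le i
    have f2 := Int.lt_floor_add_one i
    exact hmain _ (Iop_reg1 n i k _ hi (by linarith) (by linarith) (cut_contDiff k χ _ hχ hs hψ)
      (hzero χ hs))
  · intro i hi hnat α hα Cα hH
    obtain ⟨n, hn, hn'⟩ := hfl i hi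
    have e : (⌊i⌋ + k + 2).toNat = n + k + 1 := by rw [hn]; omega
    rw [e]
    have f1 := Int.floor_le i
    have f2 := Int.lt_floor_add_one i
    have f3 : (n:ℝ) - 1 < i := by
      rw [← hn']
      refine lt_of_le_of_ne f1 fun h => ?_
      rw [hn'] at h
      cases n with
      | zero => simp at h; linarith
      | succ n => exact hnat n (by rw [← h]; push_cast; ring)
    set β := min α 1 with hβ
    have hβ1 : β ≤ 1 := min_le_right _ _
    have hβα : β ≤ α := min_le_left _ _
    have hβi : n < β + i := by
      have : (n:ℝ) - i < β := lt_min (by linarith) (by linarith)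
      linarith
    have hβ0 : 0 < β := by linarith
    have hLH : LH β (fun x => (1 - x) ^ k * iteratedDerivWithin k φ (Ioo 0 1) x) (Ioo 0 1) := by
      intro x hx
      refine ⟨|Cα|, Ioo 0 1, isOpen_Ioo.mem_nhds hx, fun y hy z hz => (hH y hy z hz).trans ?_⟩
      rcases eq_or_lt_of_le (abs_nonneg (y - z)) with h0 | h0
      · rw [← h0, Real.zero_rpow hβ0.ne', Real.zero_rpow (by linarith)]
        simp
      · have h1 : |y - z| ≤ 1 := by
          rw [abs_le]; constructor <;> linarith [hy.1, hy.2, hz.1, hz.2]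
        have h2 := Real.rpow_le_rpow_of_exponent_ge h0 h1 hβα
        exact mul_le_mul (le_abs_self _) h2 (Real.rpow_nonneg (abs_nonneg _) _) (abs_nonneg _)
    have hsm : LH β (fun x : ℝ => 1 / (1 - x) ^ k) (Ioo 0 1) := by
      refine LH_of_C1 hβ1 fun x hx => ?_
      refine contDiffAt_const.div (by fun_prop) ?_
      have : 0 < 1 - x := by linarith [hx.2]
      positivity
    have hLH2 : LH β (iteratedDerivWithin k φ (Ioo 0 1)) (Ioo 0 1) := by
      refine LH.congr isOpen_Ioo (LH.mul hβ0 hLH hsm) fun x hx => ?_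
      have : (1 - x) ^ k ≠ 0 := pow_ne_zero _ (by linarith [hx.2])
      try dsimp only
      field_simp
    have hHC := psi_HC hβ0 hβ1 k φ (HC_of_iter isOpen_Ioo k hφCk hLH2)
    refine gfun_contDiffOn φ i _ fun s0 hs0 => ?_
    obtain ⟨χ, hχ, hs, hmain⟩ := local_split (psi φ) hψ.continuousOn hint i hi s0 hs0
    exact hmain _ (Iop_reg2 hβ0 n i k _ hi f3 hβi (cut_HC hβ0 hβ1 k χ _ hχ hs hHC)
      (hzero χ hs))
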